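/- arXiv:1906.01434 — 2 statements merged into one kernel-verified Lean document; each statement's English description precedes it below -/
import Mathlib

section
/- Let $c, b, r, R > 0$ with $b \le c/8$, $r \le R$, and $cR < 1$. Let $t_0 = 0$ and $t_{j+1} = t_j + \tau_j$ where $\tau_j \in [r, R]$ for all $j$, let $E_0 \in \mathbb{R}$, $E_j = E_0\prod_{i=0}^{j-1}(1 - c\tau_i)$, and set $\delta := (1 - cr)^2 e^{cr/8}$. Let $C \ge 0$ and let $(W_j)_{j \ge 0}$ be a sequence of nonnegative reals satisfying $W_{j+1} \le e^{-b\tau_j} W_j + C e^{-b\tau_j} E_j^2$ for all $j \ge 0$. Then $\delta < 1$ and for every $n \ge 0$, $W_n \le \left(W_0 + \frac{C E_0^2}{1 - \delta}\right) e^{-b t_n}$. -/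
/-!
Multiplying by `exp (b * t n)` turns the recursion into
`V (n + 1) ≤ V n + C * E n ^ 2 * exp (b * t n)` with `V n = W n * exp (b * t n)`, so it suffices
that the forcing terms are dominated by a geometric series. The `n`-th one is `C * E₀ ^ 2` times a
product of factors `(1 - c * τ i) ^ 2 * exp (b * τ i)`. Since `(1 - x) * exp x` decreases on
`[0, ∞)`, so does `(1 - x) ^ 2 * exp (θ * x)` on `[0, 1]` when `θ ≤ 2`; hence each factor is at most
the value at `x = c * r`, which is less than the value `1` at `x = 0`.
-/

open Finset Real

theorem strictAntiOn_one_sub_mul_exp : StrictAntiOn (fun x : ℝ ↦ (1 - x) * exp x) (Set.Ici 0) := by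
  refine strictAntiOn_of_deriv_neg (convex_Ici 0) (by fun_prop) fun x hx ↦ ?_
  have hderiv : HasDerivAt (fun x ↦ (1 - x) * exp x) (-1 * exp x + (1 - x) * exp x) x :=
    ((hasDerivAt_id x).const_sub 1).mul (hasDerivAt_exp x)
  rw [interior_Ici, Set.mem_Ioi] at hx
  rw [hderiv.deriv]
  linarith [mul_pos hx (exp_pos x)]

theorem strictAntiOn_one_sub_pow_mul_exp {k : ℕ} (hk : k ≠ 0) {θ : ℝ} (hθ : θ ≤ k) :
    StrictAntiOn (fun x : ℝ ↦ (1 - x) ^ k * exp (θ * x)) (Set.Icc 0 1) := by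
  have hfactor (x : ℝ) :
      (1 - x) ^ k * exp (θ * x) = ((1 - x) * exp x) ^ k * exp (-((k - θ) * x)) := by
    rw [mul_pow, ← exp_nat_mul, mul_assoc, ← exp_add]
    ring_nf
  intro x hx y hy hxy
  have hbase : (1 - y) * exp y < (1 - x) * exp x := strictAntiOn_one_sub_mul_exp hx.1 hy.1 hxy
  have hbase_nonneg : 0 ≤ (1 - y) * exp y := mul_nonneg (sub_nonneg.2 hy.2) (exp_pos y).le
  have hexp : exp (-((k - θ) * y)) ≤ exp (-((k - θ) * x)) :=
    exp_le_exp.2 (neg_le_neg (mul_le_mul_of_nonneg_left hxy.le (sub_nonneg.2 hθ)))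
  simp only [hfactor]
  exact mul_lt_mul (pow_lt_pow_left₀ hbase hbase_nonneg hk) hexp (exp_pos _)
    (pow_nonneg (hbase_nonneg.trans hbase.le) k)

theorem one_sub_pow_mul_exp_lt_one {k : ℕ} (hk : k ≠ 0) {θ x : ℝ} (hθ : θ ≤ k) (hx₀ : 0 < x)
    (hx₁ : x ≤ 1) : (1 - x) ^ k * exp (θ * x) < 1 := by
  simpa only [sub_zero, one_pow, mul_zero, exp_zero, mul_one] using
    strictAntiOn_one_sub_pow_mul_exp hk hθ (Set.left_mem_Icc.2 zero_le_one) ⟨hx₀.le, hx₁⟩ hx₀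

theorem one_sub_mul_pow_mul_exp_le {k : ℕ} (hk : k ≠ 0) {b c θ r s : ℝ} (hθ : θ ≤ k)
    (hbθ : b ≤ θ * c) (hc : 0 ≤ c) (hr : 0 ≤ r) (hrs : r ≤ s) (hcs : c * s ≤ 1) :
    (1 - c * s) ^ k * exp (b * s) ≤ (1 - c * r) ^ k * exp (θ * (c * r)) := by
  have hs : 0 ≤ s := hr.trans hrs
  have hcrs : c * r ≤ c * s := mul_le_mul_of_nonneg_left hrs hc
  calc
    (1 - c * s) ^ k * exp (b * s) ≤ (1 - c * s) ^ k * exp (θ * c * s) := mul_le_mul_of_nonneg_left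
      (exp_le_exp.2 (mul_le_mul_of_nonneg_right hbθ hs)) (pow_nonneg (sub_nonneg.2 hcs) k)
    _ = (1 - c * s) ^ k * exp (θ * (c * s)) := by rw [mul_assoc θ]
    _ ≤ (1 - c * r) ^ k * exp (θ * (c * r)) :=
      (strictAntiOn_one_sub_pow_mul_exp hk hθ).antitoneOn ⟨mul_nonneg hc hr, hcrs.trans hcs⟩
        ⟨mul_nonneg hc hs, hcs⟩ hcrs

theorem prod_pow_mul_exp_sum_le_pow {ι : Type*} (s : Finset ι) {k : ℕ} (hk : Even k) {b δ : ℝ}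
    {q τ : ι → ℝ} (h : ∀ i ∈ s, q i ^ k * exp (b * τ i) ≤ δ) :
    (∏ i ∈ s, q i) ^ k * exp (b * ∑ i ∈ s, τ i) ≤ δ ^ #s := by
  rw [mul_sum, exp_sum, ← prod_pow, ← prod_mul_distrib, ← prod_const]
  exact prod_le_prod (fun i _ ↦ mul_nonneg (hk.pow_nonneg _) (exp_pos _).le) h

theorem le_add_div_one_sub_of_le_add_geometric {𝕜 : Type*} [Field 𝕜] [LinearOrder 𝕜]
    [IsStrictOrderedRing 𝕜] {u : ℕ → 𝕜} {a δ : 𝕜} (ha : 0 ≤ a) (hδ₀ : 0 ≤ δ) (hδ₁ : δ < 1)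
    (hu : ∀ n, u (n + 1) ≤ u n + a * δ ^ n) (n : ℕ) : u n ≤ u 0 + a / (1 - δ) := by
  calc
    u n = u 0 + ∑ i ∈ range n, (u (i + 1) - u i) := by rw [sum_range_sub, add_sub_cancel]
    _ ≤ u 0 + ∑ i ∈ range n, a * δ ^ i := by gcongr with i; exact sub_le_iff_le_add'.2 (hu i)
    _ = u 0 + a * ∑ i ∈ Ico 0 n, δ ^ i := by rw [mul_sum, range_eq_Ico]
    _ ≤ u 0 + a * (δ ^ 0 / (1 - δ)) := by gcongr; exact geom_sum_Ico_le_of_lt_one hδ₀ hδ₁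
    _ = u 0 + a / (1 - δ) := by rw [pow_zero, mul_one_div]

theorem le_mul_exp_neg_of_geometric_forcing {b a δ : ℝ} {τ t W F : ℕ → ℝ} (ha : 0 ≤ a)
    (hδ₀ : 0 ≤ δ) (hδ₁ : δ < 1) (ht₀ : t 0 = 0) (ht : ∀ j, t (j + 1) = t j + τ j)
    (hF : ∀ j, F j * exp (b * t j) ≤ a * δ ^ j)
    (hW : ∀ j, W (j + 1) ≤ exp (-b * τ j) * (W j + F j)) (n : ℕ) :
    W n ≤ (W 0 + a / (1 - δ)) * exp (-b * t n) := by
  have hstep (j : ℕ) :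
      W (j + 1) * exp (b * t (j + 1)) ≤ W j * exp (b * t j) + a * δ ^ j := calc
    W (j + 1) * exp (b * t (j + 1))
      ≤ exp (-b * τ j) * (W j + F j) * exp (b * t (j + 1)) := by gcongr; exact hW j
    _ = W j * exp (b * t j) + F j * exp (b * t j) := by
      have hexp : exp (-b * τ j) * exp (b * t (j + 1)) = exp (b * t j) := by
        rw [← exp_add, ht]
        ring_nf
      linear_combination (W j + F j) * hexp
    _ ≤ W j * exp (b * t j) + a * δ ^ j := add_le_add le_rfl (hF j)
  have hweighted : W n * exp (b * t n) ≤ W 0 + a / (1 - δ) := by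
    simpa only [ht₀, mul_zero, exp_zero, mul_one] using
      le_add_div_one_sub_of_le_add_geometric (u := fun j ↦ W j * exp (b * t j)) ha hδ₀ hδ₁ hstep n
  rwa [neg_mul, exp_neg, ← div_eq_mul_inv, le_div_iff₀ (exp_pos _)]

theorem stmt_4_general {c b θ r C E₀ : ℝ} (hc : 0 < c) (hr : 0 < r) (hbθ : b ≤ θ * c)
    (hθ : θ ≤ 2) (hC : 0 ≤ C) {τ t E W : ℕ → ℝ} (hτ : ∀ j, r ≤ τ j) (hcτ : ∀ j, c * τ j ≤ 1)
    (ht₀ : t 0 = 0) (ht : ∀ j, t (j + 1) = t j + τ j)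
    (hE : ∀ j, E j = E₀ * ∏ i ∈ range j, (1 - c * τ i))
    (hW : ∀ j, W (j + 1) ≤ exp (-b * τ j) * W j + C * exp (-b * τ j) * E j ^ 2) :
    (1 - c * r) ^ 2 * exp (θ * (c * r)) < 1 ∧
    ∀ n, W n ≤ (W 0 + C * E₀ ^ 2 / (1 - (1 - c * r) ^ 2 * exp (θ * (c * r)))) *
      exp (-b * t n) := by
  set δ := (1 - c * r) ^ 2 * exp (θ * (c * r))
  have hδ₁ : δ < 1 := one_sub_pow_mul_exp_lt_one two_ne_zero hθ (mul_pos hc hr)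
    ((mul_le_mul_of_nonneg_left (hτ 0) hc.le).trans (hcτ 0))
  have hfactor (j : ℕ) : (1 - c * τ j) ^ 2 * exp (b * τ j) ≤ δ :=
    one_sub_mul_pow_mul_exp_le two_ne_zero hθ hbθ hc.le hr.le (hτ j) (hcτ j)
  have ht_sum (j : ℕ) : t j = ∑ i ∈ range j, τ i :=
    (sum_range_induction τ t ht₀ j fun i _ ↦ ht i).symm
  have henergy (j : ℕ) : C * E j ^ 2 * exp (b * t j) ≤ C * E₀ ^ 2 * δ ^ j := calc
    C * E j ^ 2 * exp (b * t j) = C * E₀ ^ 2 *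
        ((∏ i ∈ range j, (1 - c * τ i)) ^ 2 * exp (b * ∑ i ∈ range j, τ i)) := by
      rw [hE, ht_sum]
      ring
    _ ≤ C * E₀ ^ 2 * δ ^ j := by
      gcongr
      simpa only [card_range] using
        prod_pow_mul_exp_sum_le_pow (range j) even_two fun i _ ↦ hfactor i
  exact ⟨hδ₁, le_mul_exp_neg_of_geometric_forcing (by positivity) (by positivity) hδ₁ ht₀ ht
    henergy fun j ↦ (hW j).trans_eq (by ring)⟩

/-- Discrete Gronwall-type estimate (equation (62)): the recursive Lyapunov bound
between sampling instants together with the explicit decay of the sampled energies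
yields exponential decay of the Lyapunov sequence at rate `b`. -/
theorem stmt_4 (c b r R C E₀ : ℝ) (hc : 0 < c) (hb : 0 < b) (hr : 0 < r) (hR : 0 < R)
    (hbc : b ≤ c / 8) (hrR : r ≤ R) (hcR : c * R < 1) (hC : 0 ≤ C)
    (τ t : ℕ → ℝ) (hτ : ∀ j, τ j ∈ Set.Icc r R)
    (ht0 : t 0 = 0) (ht : ∀ j, t (j + 1) = t j + τ j)
    (E : ℕ → ℝ) (hE : ∀ j, E j = E₀ * ∏ i ∈ Finset.range j, (1 - c * τ i))
    (W : ℕ → ℝ) (hW : ∀ j, 0 ≤ W j)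
    (hWrec : ∀ j, W (j + 1) ≤ Real.exp (-b * τ j) * W j + C * Real.exp (-b * τ j) * (E j) ^ 2) :
    (1 - c * r) ^ 2 * Real.exp (c * r / 8) < 1 ∧
    ∀ n, W n ≤ (W 0 + C * E₀ ^ 2 / (1 - (1 - c * r) ^ 2 * Real.exp (c * r / 8))) *
      Real.exp (-b * t n) := by
  simpa only [one_div_mul_eq_div] using stmt_4_general (θ := 1 / 8) hc hr (by linarith)
    (by norm_num) hC (fun j ↦ (hτ j).1)
    (fun j ↦ (mul_le_mul_of_nonneg_left (hτ j).2 hc.le).trans hcR.le) ht0 ht hE hWrec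
end

section
/- Let $c, r, R > 0$ with $r \le R$ and $cR < 1$. Let $0 = t_0 < t_1 < \cdots$ with $t_j \to \infty$ and $\tau_j := t_{j+1} - t_j \in [r, R]$ for all $j$. Let $E_0 \in \mathbb{R}$ and let $E : [0,\infty) \to \mathbb{R}$ satisfy $E(t) = (1 - c(t - t_j))\,E_0\prod_{i=0}^{j-1}(1 - c\tau_i)$ for all $t \in [t_j, t_{j+1})$ and all $j \ge 0$. Then for all $t \ge 0$, $|E(t)| \le \frac{|E_0|}{1 - cr}\,\exp\!\left(\frac{\ln(1 - cr)}{R}\, t\right)$; in particular $E(t) \to 0$ exponentially as $t \to \infty$. -/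
open Filter Set

/-!
Each completed sampling interval multiplies the energy by a factor of modulus at most
`q = 1 - c * r`, and within an interval the modulus never exceeds its value at the start. Intervals
have length at most `R`, so `x < t (j + 1)` forces `x / R ≤ j + 1`. Hence
`|E x| ≤ |E₀| * q ^ j = |E₀| / q * q ^ (j + 1) ≤ |E₀| / q * q ^ (x / R)`: the unfinished interval
costs the factor `1 / q`.
-/

theorem exists_mem_Ico_succ_of_tendsto_atTop {α : Type*} [LinearOrder α] [NoMaxOrder α]
    {t : ℕ → α} (ht : Tendsto t atTop atTop) {x : α} (hx : t 0 ≤ x) :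
    ∃ j, x ∈ Ico (t j) (t (j + 1)) := by
  obtain ⟨j, hj, hj_succ⟩ := Nat.exists_not_and_succ_of_not_zero_of_exists
    (p := fun n => x < t n) hx.not_gt (ht.eventually_gt_atTop x).exists
  exact ⟨j, not_lt.mp hj, hj_succ⟩

theorem le_add_nsmul_of_succ_sub_le {α : Type*} [AddCommGroup α] [PartialOrder α]
    [IsOrderedAddMonoid α] {t : ℕ → α} {R : α} (hstep : ∀ j, t (j + 1) - t j ≤ R) (n : ℕ) :
    t n ≤ t 0 + n • R := by
  rw [← sub_le_iff_le_add', ← Finset.sum_range_sub]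
  simpa only [Finset.card_range] using
    Finset.sum_le_card_nsmul (Finset.range n) _ R fun j _ => hstep j

section LinearOrderedRing

variable {K : Type*} [CommRing K] [LinearOrder K] [IsStrictOrderedRing K]

theorem abs_prod_le_pow_card {ι : Type*} (s : Finset ι) {f : ι → K} {q : K}
    (hf : ∀ i ∈ s, |f i| ≤ q) : |∏ i ∈ s, f i| ≤ q ^ s.card := by
  rw [Finset.abs_prod, ← Finset.prod_const]
  exact Finset.prod_le_prod (fun i _ => abs_nonneg (f i)) hf

theorem abs_one_sub_mul_le_one_of_le {c s τ : K} (hs : 0 ≤ s) (hsτ : s ≤ τ)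
    (hτ : |1 - c * τ| ≤ 1) : |1 - c * s| ≤ 1 := by
  rw [abs_le] at hτ ⊢
  rcases le_total 0 c with hc | hc
  · have hcs : 0 ≤ c * s := mul_nonneg hc hs
    have hcsτ : c * s ≤ c * τ := mul_le_mul_of_nonneg_left hsτ hc
    constructor <;> linarith
  · have hcs : c * s ≤ 0 := mul_nonpos_of_nonpos_of_nonneg hc hs
    have hcτs : c * τ ≤ c * s := mul_le_mul_of_nonpos_left hsτ hc
    constructor <;> linarith

theorem abs_one_sub_mul_le_one_sub_mul {c r R τ : K} (hc : 0 ≤ c) (hsum : c * r + c * R ≤ 2)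
    (hτ : τ ∈ Icc r R) : |1 - c * τ| ≤ 1 - c * r := by
  have hrτ : c * r ≤ c * τ := mul_le_mul_of_nonneg_left hτ.1 hc
  have hτR : c * τ ≤ c * R := mul_le_mul_of_nonneg_left hτ.2 hc
  rw [abs_le]
  constructor <;> linarith

theorem abs_one_sub_mul_mul_prod_le {c q E₀ x : K} {t : ℕ → K} {j : ℕ} (hq : q ≤ 1)
    (hfactor : ∀ i, |1 - c * (t (i + 1) - t i)| ≤ q) (hx : x ∈ Ico (t j) (t (j + 1))) :
    |(1 - c * (x - t j)) * (E₀ * ∏ i ∈ Finset.range j, (1 - c * (t (i + 1) - t i)))|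
      ≤ |E₀| * q ^ j := by
  have hpartial : |1 - c * (x - t j)| ≤ 1 :=
    abs_one_sub_mul_le_one_of_le (sub_nonneg.mpr hx.1) (sub_le_sub_right hx.2.le _)
      ((hfactor j).trans hq)
  have hprod : |∏ i ∈ Finset.range j, (1 - c * (t (i + 1) - t i))| ≤ q ^ j := by
    simpa only [Finset.card_range] using
      abs_prod_le_pow_card (Finset.range j) fun i _ => hfactor i
  rw [abs_mul, abs_mul]
  exact (mul_le_of_le_one_left (by positivity) hpartial).trans
    (mul_le_mul_of_nonneg_left hprod (abs_nonneg E₀))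

end LinearOrderedRing

theorem pow_le_exp_log_div_mul {q R x : ℝ} {n : ℕ} (hq0 : 0 < q) (hq1 : q ≤ 1) (hR : 0 < R)
    (hx : x ≤ n * R) : q ^ n ≤ Real.exp (Real.log q / R * x) := by
  calc q ^ n = q ^ (n : ℝ) := (Real.rpow_natCast q n).symm
    _ ≤ q ^ (x / R) := Real.rpow_le_rpow_of_exponent_ge hq0 hq1 ((div_le_iff₀ hR).mpr hx)
    _ = Real.exp (Real.log q / R * x) := by
      rw [Real.rpow_def_of_pos hq0, mul_div_left_comm, mul_comm]

theorem tendsto_zero_of_abs_le_mul_exp {f : ℝ → ℝ} {C a : ℝ} (ha : a < 0)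
    (hf : ∀ᶠ x in atTop, |f x| ≤ C * Real.exp (a * x)) : Tendsto f atTop (nhds 0) := by
  have hexp : Tendsto (fun x => Real.exp (a * x)) atTop (nhds 0) :=
    Real.tendsto_exp_atBot.comp (tendsto_id.const_mul_atTop_of_neg ha)
  exact squeeze_zero_norm' hf (by simpa only [mul_zero] using hexp.const_mul C)

section SampledEnergy

variable {c q R E₀ : ℝ} {t : ℕ → ℝ} {E : ℝ → ℝ}

theorem abs_sampled_energy_le_exp (hq0 : 0 < q) (hq1 : q ≤ 1) (hR : 0 < R) (ht0 : t 0 = 0)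
    (htinf : Tendsto t atTop atTop) (hstep : ∀ j, t (j + 1) - t j ≤ R)
    (hfactor : ∀ j, |1 - c * (t (j + 1) - t j)| ≤ q)
    (hE : ∀ j, ∀ x ∈ Ico (t j) (t (j + 1)),
      E x = (1 - c * (x - t j)) *
        (E₀ * ∏ i ∈ Finset.range j, (1 - c * (t (i + 1) - t i))))
    {x : ℝ} (hx : 0 ≤ x) :
    |E x| ≤ |E₀| / q * Real.exp (Real.log q / R * x) := by
  obtain ⟨j, hj⟩ := exists_mem_Ico_succ_of_tendsto_atTop htinf (ht0.trans_le hx)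
  have hxR : x ≤ (j + 1 : ℕ) * R := by
    simpa only [ht0, zero_add, nsmul_eq_mul] using
      hj.2.le.trans (le_add_nsmul_of_succ_sub_le hstep (j + 1))
  calc |E x| ≤ |E₀| * q ^ j := by
        rw [hE j x hj]
        exact abs_one_sub_mul_mul_prod_le hq1 hfactor hj
    _ = |E₀| / q * q ^ (j + 1) := by
        rw [pow_succ', ← mul_assoc, div_mul_cancel₀ _ hq0.ne']
    _ ≤ |E₀| / q * Real.exp (Real.log q / R * x) := by
        gcongr
        exact pow_le_exp_log_div_mul hq0 hq1 hR hxR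

/-- The factors may be negative: for steps in `[r, R]` the best `q` is
`max |1 - c * r| |1 - c * R|`. -/
theorem stmt_12_general (hq0 : 0 < q) (hq1 : q < 1) (hR : 0 < R) (ht0 : t 0 = 0)
    (htinf : Tendsto t atTop atTop) (hstep : ∀ j, t (j + 1) - t j ≤ R)
    (hfactor : ∀ j, |1 - c * (t (j + 1) - t j)| ≤ q)
    (hE : ∀ j, ∀ x ∈ Ico (t j) (t (j + 1)),
      E x = (1 - c * (x - t j)) *
        (E₀ * ∏ i ∈ Finset.range j, (1 - c * (t (i + 1) - t i)))) :
    (∀ x : ℝ, 0 ≤ x → |E x| ≤ |E₀| / q * Real.exp (Real.log q / R * x)) ∧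
    Tendsto E atTop (nhds 0) := by
  have hbound : ∀ x : ℝ, 0 ≤ x → |E x| ≤ |E₀| / q * Real.exp (Real.log q / R * x) :=
    fun _ hx => abs_sampled_energy_le_exp hq0 hq1.le hR ht0 htinf hstep hfactor hE hx
  have hrate : Real.log q / R < 0 := div_neg_of_neg_of_pos (Real.log_neg hq0 hq1) hR
  exact ⟨hbound, tendsto_zero_of_abs_le_mul_exp hrate ((eventually_ge_atTop 0).mono hbound)⟩

end SampledEnergy

/-- Exponential decay of the internal energy in continuous time under ZOH
sampled-data control: `|E(t)| ≤ |E₀|/(1 - cr) · exp( (ln(1 - cr)/R) t )`. -/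
theorem stmt_12 (c r R E₀ : ℝ) (hc : 0 < c) (hr : 0 < r) (hR : 0 < R)
    (hrR : r ≤ R) (hcR : c * R < 1)
    (t : ℕ → ℝ) (ht0 : t 0 = 0) (htmono : StrictMono t)
    (htinf : Tendsto t atTop atTop)
    (hτ : ∀ j, t (j + 1) - t j ∈ Icc r R)
    (E : ℝ → ℝ)
    (hE : ∀ j, ∀ x ∈ Ico (t j) (t (j + 1)),
      E x = (1 - c * (x - t j)) *
        (E₀ * ∏ i ∈ Finset.range j, (1 - c * (t (i + 1) - t i)))) :
    (∀ x : ℝ, 0 ≤ x →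
      |E x| ≤ |E₀| / (1 - c * r) * Real.exp (Real.log (1 - c * r) / R * x)) ∧
    Tendsto E atTop (nhds 0) := by
  have hcr : 0 < c * r := mul_pos hc hr
  have hcrR : c * r ≤ c * R := mul_le_mul_of_nonneg_left hrR hc.le
  exact stmt_12_general (by linarith) (by linarith) hR ht0 htinf (fun j => (hτ j).2)
    (fun j => abs_one_sub_mul_le_one_sub_mul hc.le (by linarith) (hτ j)) hE
end
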